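/- arXiv:2601.02079 — 2 statements merged into one kernel-verified Lean document; each statement's English description precedes it below -/
import Mathlib

section
/- Let V, W ∈ (0,1). Then: (i) for every x ∈ ℝ, f^max_{VW}(x) ≤ (1+V)/(1−W), with equality if and only if x is an even multiple of π; (ii) for every x ∈ ℝ, f^max_{VW}(x) ≥ m, where m = (1−V)/(1−W) if V ≤ W and m = (1+V)/(1+W) if V ≥ W, with equality if and only if x is an odd multiple of π. In particular sup_{x∈ℝ} f^max_{VW}(x) = (1+V)/(1−W) and inf_{x∈ℝ} f^max_{VW}(x) = m. -/
/-- For parameters `V, W ∈ [0,1)`, the function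
`f_{VW}(α, x) = (1 + V·cos(x + α))/(1 − W·cos α)`. -/
noncomputable def fVW (V W α x : ℝ) : ℝ :=
    (1 + V * Real.cos (x + α)) / (1 - W * Real.cos α)

/-- `f^max_{VW}(x) = sup_{α ∈ ℝ} f_{VW}(α, x)`. -/
noncomputable def fVWmax (V W x : ℝ) : ℝ := ⨆ α : ℝ, fVW V W α x

/-!
As `1 - W cos α > 0`, the inequality `f_{VW}(α, x) ≤ M` says `V cos (x + α) + M W cos α ≤ M - 1`.
Its left side is a sinusoid in `α` with amplitude `√(V² + 2 V M W cos x + (M W)²)`, so the maximum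
`M = f^max_{VW}(x)` is characterised by this amplitude being `M - 1`. For `V W > 0` the amplitude is
strictly increasing in `cos x`, hence so is `f^max_{VW}(x)`, and its extreme values are those at
`cos x = 1` and `cos x = -1`.
-/

section

open Real Set

theorem isGreatest_range_mul_cos_add_mul_sin (a b : ℝ) :
    IsGreatest (range fun α => a * cos α + b * sin α) √(a ^ 2 + b ^ 2) := by
  refine ⟨⟨Complex.arg ⟨a, b⟩, ?_⟩, forall_mem_range.2 fun α => le_sqrt_of_sq_le ?_⟩
  · set z : ℂ := ⟨a, b⟩
    have norm_z : ‖z‖ = √(a ^ 2 + b ^ 2) := Complex.norm_eq_sqrt_sq_add_sq z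
    have ha : ‖z‖ * cos z.arg = a := Complex.norm_mul_cos_arg z
    have hb : ‖z‖ * sin z.arg = b := Complex.norm_mul_sin_arg z
    calc a * cos z.arg + b * sin z.arg
        = ‖z‖ * (cos z.arg ^ 2 + sin z.arg ^ 2) := by
          linear_combination (-cos z.arg) * ha - sin z.arg * hb
      _ = √(a ^ 2 + b ^ 2) := by rw [cos_sq_add_sin_sq, mul_one, norm_z]
  · calc (a * cos α + b * sin α) ^ 2
        ≤ (a * cos α + b * sin α) ^ 2 + (a * sin α - b * cos α) ^ 2 :=
          le_add_of_nonneg_right (sq_nonneg _)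
      _ = a ^ 2 + b ^ 2 := by
          linear_combination (a ^ 2 + b ^ 2) * sin_sq_add_cos_sq α

/-- The amplitude `√(a² + 2ab cos x + b²)` of the sinusoid `α ↦ a cos (x + α) + b cos α`, by the law
of cosines. -/
noncomputable def cosAmplitude (a b x : ℝ) : ℝ := √(a ^ 2 + 2 * (a * b) * cos x + b ^ 2)

theorem isGreatest_range_cosAmplitude (a b x : ℝ) :
    IsGreatest (range fun α => a * cos (x + α) + b * cos α) (cosAmplitude a b x) := by
  convert isGreatest_range_mul_cos_add_mul_sin (a * cos x + b) (-(a * sin x)) using 2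
  · ext α
    rw [cos_add]
    ring
  · rw [cosAmplitude]
    congr 1
    linear_combination (-a ^ 2) * sin_sq_add_cos_sq x

theorem cosAmplitude_lt_cosAmplitude {a b x y : ℝ} (hab : 0 < a * b) (hxy : cos x < cos y) :
    cosAmplitude a b x < cosAmplitude a b y := by
  refine sqrt_lt_sqrt ?_ (by gcongr)
  calc 0 ≤ (a * cos x + b) ^ 2 + (a * sin x) ^ 2 := by positivity
    _ = a ^ 2 + 2 * (a * b) * cos x + b ^ 2 := by
      linear_combination a ^ 2 * sin_sq_add_cos_sq x

variable {V W : ℝ}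

theorem one_sub_mul_cos_pos (hW : |W| < 1) (α : ℝ) : 0 < 1 - W * cos α := by
  have : |W * cos α| < 1 := by
    rw [abs_mul]
    exact mul_lt_one_of_nonneg_of_lt_one_left (abs_nonneg W) hW (abs_cos_le_one α)
  linarith [le_abs_self (W * cos α)]

theorem fVW_le_iff (hW : |W| < 1) {α x M : ℝ} :
    fVW V W α x ≤ M ↔ V * cos (x + α) + M * W * cos α ≤ M - 1 := by
  rw [fVW, div_le_iff₀ (one_sub_mul_cos_pos hW α)]
  constructor <;> intro h <;> linarith

theorem fVW_eq_iff (hW : |W| < 1) {α x M : ℝ} :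
    fVW V W α x = M ↔ V * cos (x + α) + M * W * cos α = M - 1 := by
  rw [fVW, div_eq_iff (one_sub_mul_cos_pos hW α).ne']
  constructor <;> intro h <;> linarith

theorem isGreatest_range_fVW_iff (hW : |W| < 1) {x M : ℝ} :
    IsGreatest (range fun α => fVW V W α x) M ↔ cosAmplitude V (M * W) x = M - 1 := by
  have h_sinusoid := isGreatest_range_cosAmplitude V (M * W) x
  calc IsGreatest (range fun α => fVW V W α x) M
      ↔ IsGreatest (range fun α => V * cos (x + α) + M * W * cos α) (M - 1) :=
        and_congr (exists_congr fun _ => fVW_eq_iff hW) <| by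
          simp only [mem_upperBounds, forall_mem_range, fVW_le_iff hW]
    _ ↔ cosAmplitude V (M * W) x = M - 1 :=
        ⟨fun h => h_sinusoid.unique h, fun h => h ▸ h_sinusoid⟩

theorem isGreatest_range_fVW_fVWmax (hW : |W| < 1) (x : ℝ) :
    IsGreatest (range fun α => fVW V W α x) (fVWmax V W x) := by
  have h_cont : Continuous fun α => fVW V W α x :=
    Continuous.div (by fun_prop) (by fun_prop) fun α => (one_sub_mul_cos_pos hW α).ne'
  have h_per : Function.Periodic (fun α => fVW V W α x) (2 * π) := fun α => by
    simp only [fVW, ← add_assoc, cos_add_two_pi]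
  have h_compact := h_per.compact_of_continuous two_pi_pos.ne' h_cont
  exact h_compact.isGreatest_sSup (range_nonempty _)

theorem fVWmax_eq_iff (hW : |W| < 1) {x M : ℝ} :
    fVWmax V W x = M ↔ cosAmplitude V (M * W) x = M - 1 := by
  rw [← isGreatest_range_fVW_iff hW]
  exact ⟨fun h => h ▸ isGreatest_range_fVW_fVWmax hW x,
    (isGreatest_range_fVW_fVWmax hW x).unique⟩

theorem one_le_fVWmax (hW : |W| < 1) (x : ℝ) : 1 ≤ fVWmax V W x :=
  sub_nonneg.1 <| (fVWmax_eq_iff hW).1 rfl ▸ sqrt_nonneg _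

theorem fVWmax_lt_fVWmax_of_cos_lt (hVW : 0 < V * W) (hW : |W| < 1) {x y : ℝ}
    (hxy : cos x < cos y) : fVWmax V W x < fVWmax V W y := by
  set M := fVWmax V W x with hM
  have hM_pos : 0 < M := zero_lt_one.trans_le (one_le_fVWmax hW x)
  have h_amp : M - 1 < cosAmplitude V (M * W) y := by
    rw [← (fVWmax_eq_iff hW).1 hM.symm]
    exact cosAmplitude_lt_cosAmplitude (mul_left_comm V M W ▸ mul_pos hM_pos hVW) hxy
  obtain ⟨α, hα⟩ := (isGreatest_range_cosAmplitude V (M * W) y).1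
  calc M < fVW V W α y := not_le.1 fun h => ((fVW_le_iff hW).1 h).not_gt (h_amp.trans_eq hα.symm)
    _ ≤ fVWmax V W y := (isGreatest_range_fVW_fVWmax hW y).2 ⟨α, rfl⟩

theorem fVWmax_congr_cos (hW : |W| < 1) {x y : ℝ} (hxy : cos x = cos y) :
    fVWmax V W x = fVWmax V W y := by
  rw [fVWmax_eq_iff hW, cosAmplitude, hxy, ← cosAmplitude]
  exact (fVWmax_eq_iff hW).1 rfl

theorem fVWmax_le_fVWmax_iff (hVW : 0 < V * W) (hW : |W| < 1) {x y : ℝ} :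
    fVWmax V W x ≤ fVWmax V W y ↔ cos x ≤ cos y := by
  refine ⟨fun h => not_lt.1 fun hyx => h.not_gt (fVWmax_lt_fVWmax_of_cos_lt hVW hW hyx),
    fun h => ?_⟩
  rcases h.lt_or_eq with h_lt | h_eq
  · exact (fVWmax_lt_fVWmax_of_cos_lt hVW hW h_lt).le
  · exact (fVWmax_congr_cos hW h_eq).le

theorem fVWmax_eq_fVWmax_iff (hVW : 0 < V * W) (hW : |W| < 1) {x y : ℝ} :
    fVWmax V W x = fVWmax V W y ↔ cos x = cos y := by
  simp only [le_antisymm_iff, fVWmax_le_fVWmax_iff hVW hW]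

theorem cosAmplitude_zero (a b : ℝ) : cosAmplitude a b 0 = |a + b| := by
  rw [cosAmplitude, cos_zero, ← sqrt_sq_eq_abs]
  congr 1
  ring

theorem cosAmplitude_pi (a b : ℝ) : cosAmplitude a b π = |a - b| := by
  rw [cosAmplitude, cos_pi, ← sqrt_sq_eq_abs]
  congr 1
  ring

theorem fVWmax_zero (hVW : 0 ≤ V + W) (hW : |W| < 1) :
    fVWmax V W 0 = (1 + V) / (1 - W) := by
  have hW' : 0 < 1 - W := sub_pos.2 (abs_lt.1 hW).2
  have h_sum : V + (1 + V) / (1 - W) * W = (V + W) / (1 - W) := by field_simp; ring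
  rw [fVWmax_eq_iff hW, cosAmplitude_zero, h_sum, abs_of_nonneg (by positivity)]
  field_simp
  ring

theorem fVWmax_pi_of_le (hVW : V ≤ W) (hW : |W| < 1) :
    fVWmax V W π = (1 - V) / (1 - W) := by
  have hW' : 0 < 1 - W := sub_pos.2 (abs_lt.1 hW).2
  have h_diff : V - (1 - V) / (1 - W) * W = -((W - V) / (1 - W)) := by field_simp; ring
  rw [fVWmax_eq_iff hW, cosAmplitude_pi, h_diff, abs_neg,
    abs_of_nonneg (div_nonneg (sub_nonneg.2 hVW) hW'.le)]
  field_simp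
  ring

theorem fVWmax_pi_of_ge (hWV : W ≤ V) (hW : |W| < 1) :
    fVWmax V W π = (1 + V) / (1 + W) := by
  have hW' : 0 < 1 + W := by linarith [(abs_lt.1 hW).1]
  have h_diff : V - (1 + V) / (1 + W) * W = (V - W) / (1 + W) := by field_simp; ring
  rw [fVWmax_eq_iff hW, cosAmplitude_pi, h_diff,
    abs_of_nonneg (div_nonneg (sub_nonneg.2 hWV) hW'.le)]
  field_simp
  ring

theorem fVWmax_pi (hW : |W| < 1) :
    fVWmax V W π = if V ≤ W then (1 - V) / (1 - W) else (1 + V) / (1 + W) := by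
  split_ifs with hVW
  · exact fVWmax_pi_of_le hVW hW
  · exact fVWmax_pi_of_ge (not_le.1 hVW).le hW

theorem cos_eq_one_iff_exists_eq_even_mul_pi {x : ℝ} :
    cos x = 1 ↔ ∃ k : ℤ, x = 2 * k * π := by
  rw [cos_eq_one_iff]
  exact exists_congr fun k => by rw [eq_comm, mul_left_comm, mul_assoc]

theorem cos_eq_neg_one_iff_exists_eq_odd_mul_pi {x : ℝ} :
    cos x = -1 ↔ ∃ k : ℤ, x = (2 * k + 1) * π := by
  rw [cos_eq_neg_one_iff]
  exact exists_congr fun k => by rw [eq_comm, show π + k * (2 * π) = (2 * k + 1) * π by ring]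

theorem fVWmax_bounds_general (V W : ℝ) (hV : 0 < V) (hW : W ∈ Ioo (0 : ℝ) 1) :
    (∀ x : ℝ, fVWmax V W x ≤ (1 + V) / (1 - W)) ∧
    (∀ x : ℝ, fVWmax V W x = (1 + V) / (1 - W) ↔ ∃ k : ℤ, x = 2 * k * π) ∧
    (∀ x : ℝ, (if V ≤ W then (1 - V) / (1 - W) else (1 + V) / (1 + W)) ≤ fVWmax V W x) ∧
    (∀ x : ℝ, fVWmax V W x = (if V ≤ W then (1 - V) / (1 - W) else (1 + V) / (1 + W)) ↔
      ∃ k : ℤ, x = (2 * k + 1) * π) ∧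
    (⨆ x : ℝ, fVWmax V W x) = (1 + V) / (1 - W) ∧
    (⨅ x : ℝ, fVWmax V W x) =
      (if V ≤ W then (1 - V) / (1 - W) else (1 + V) / (1 + W)) := by
  have hVW : 0 < V * W := mul_pos hV hW.1
  have hW_abs : |W| < 1 := by rw [abs_of_pos hW.1]; exact hW.2
  rw [← fVWmax_zero (add_pos hV hW.1).le hW_abs, ← fVWmax_pi hW_abs]
  have h_le (x : ℝ) : fVWmax V W x ≤ fVWmax V W 0 :=
    (fVWmax_le_fVWmax_iff hVW hW_abs).2 (cos_zero ▸ cos_le_one x)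
  have h_ge (x : ℝ) : fVWmax V W π ≤ fVWmax V W x :=
    (fVWmax_le_fVWmax_iff hVW hW_abs).2 (cos_pi ▸ neg_one_le_cos x)
  refine ⟨h_le, fun x => ?_, h_ge, fun x => ?_, ?_, ?_⟩
  · rw [fVWmax_eq_fVWmax_iff hVW hW_abs, cos_zero, cos_eq_one_iff_exists_eq_even_mul_pi]
  · rw [fVWmax_eq_fVWmax_iff hVW hW_abs, cos_pi, cos_eq_neg_one_iff_exists_eq_odd_mul_pi]
  · exact IsGreatest.csSup_eq ⟨⟨0, rfl⟩, forall_mem_range.2 h_le⟩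
  · exact IsLeast.csInf_eq ⟨⟨π, rfl⟩, forall_mem_range.2 h_ge⟩

end

/-- For `V, W ∈ (0,1)`:
(i) `f^max_{VW}(x) ≤ (1+V)/(1−W)` with equality iff `x` is an even multiple of `π`;
(ii) `f^max_{VW}(x) ≥ m` (`m = (1−V)/(1−W)` if `V ≤ W`, `m = (1+V)/(1+W)` if `V ≥ W`),
with equality iff `x` is an odd multiple of `π`.  In particular
`sup_x f^max_{VW}(x) = (1+V)/(1−W)` and `inf_x f^max_{VW}(x) = m`. -/
theorem fVWmax_bounds (V W : ℝ)
    (hV : V ∈ Set.Ioo (0 : ℝ) 1) (hW : W ∈ Set.Ioo (0 : ℝ) 1) :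
    (∀ x : ℝ, fVWmax V W x ≤ (1 + V) / (1 - W)) ∧
    (∀ x : ℝ, fVWmax V W x = (1 + V) / (1 - W) ↔ ∃ k : ℤ, x = 2 * k * Real.pi) ∧
    (∀ x : ℝ, (if V ≤ W then (1 - V) / (1 - W) else (1 + V) / (1 + W)) ≤ fVWmax V W x) ∧
    (∀ x : ℝ, fVWmax V W x = (if V ≤ W then (1 - V) / (1 - W) else (1 + V) / (1 + W)) ↔
      ∃ k : ℤ, x = (2 * k + 1) * Real.pi) ∧
    (⨆ x : ℝ, fVWmax V W x) = (1 + V) / (1 - W) ∧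
    (⨅ x : ℝ, fVWmax V W x) =
      (if V ≤ W then (1 - V) / (1 - W) else (1 + V) / (1 + W)) :=
  fVWmax_bounds_general V W hV.1 hW
end

section
/- Let V₁, W₁ ∈ (0,1), and set L = (V₁² − W₁)/(V₁(1−W₁)), K = W₁(1−V₁²)/(V₁(1−W₁)), and Q₁ = V₁(1+W₁)/(2W₁) (equivalently Q₁ = (K² − L² + 1)/(2K)). Consider the system of equations sin x = L·sin α and sin(x + α) = −K·sin α in (x, α) ∈ ℝ². If Q₁ > 1, then the solution set is exactly { (x, α) : x and α are both integer multiples of π }. If Q₁ ≤ 1 (in which case L < 0), then the solution set is exactly the union of that set with { (x, α) : cos x = −Q₁, cos α = (Q₁ − K)/L, and sign(sin x) = −sign(sin α) }. -/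
/-!
Where `sin α ≠ 0`, expanding `sin (x + α)` and cancelling `sin α` turns the second equation into
`cos x + L cos α = -K`. Eliminating `α` between this and the first equation by `sin² + cos² = 1`
leaves `2 K cos x = -(K² - L² + 1)`: this is the passage from the sine rule to the cosine rule in
a triangle with sides `1`, `K`, `L`. Conversely the two cosines determine `sin x` only up to sign,
which is what the sign condition fixes. If `Q₁ > 1` no angle has cosine `-Q₁`, and `Q₁ ≤ 1` bounds
`V₁` by the harmonic mean of `1` and `W₁`, hence `V₁²` by their product.
-/

theorem eq_of_sq_eq_sq_of_sign_eq {a b : ℝ} (hsq : a ^ 2 = b ^ 2)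
    (hsign : Real.sign a = Real.sign b) : a = b := by
  obtain hab | hab := sq_eq_sq_iff_eq_or_eq_neg.mp hsq
  · exact hab
  · rw [hab, Real.sign_neg, neg_eq_self, Real.sign_eq_zero_iff] at hsign
    rw [hab, hsign, neg_zero]

theorem sign_mul_of_neg {a : ℝ} (ha : a < 0) (b : ℝ) : Real.sign (a * b) = -Real.sign b := by
  obtain hb | rfl | hb := lt_trichotomy b 0
  · rw [Real.sign_of_neg hb, Real.sign_of_pos (mul_pos_of_neg_of_neg ha hb), neg_neg]
  · rw [mul_zero, Real.sign_zero, neg_zero]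
  · rw [Real.sign_of_pos hb, Real.sign_of_neg (mul_neg_of_neg_of_pos ha hb)]

theorem sq_lt_of_mul_one_add_le_two_mul {v w : ℝ} (hv : 0 ≤ v) (hw : 0 < w) (hw1 : w ≠ 1)
    (h : v * (1 + w) ≤ 2 * w) : v ^ 2 < w := by
  have hsub : 0 < (1 - w) ^ 2 := sq_pos_of_ne_zero (sub_ne_zero.mpr hw1.symm)
  refine lt_of_mul_lt_mul_right (a := (1 + w) ^ 2) ?_ (by positivity)
  calc v ^ 2 * (1 + w) ^ 2 = (v * (1 + w)) ^ 2 := by ring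
    _ ≤ (2 * w) ^ 2 := by gcongr
    _ < (2 * w) ^ 2 + w * (1 - w) ^ 2 := lt_add_of_pos_right _ (mul_pos hw hsub)
    _ = w * (1 + w) ^ 2 := by ring

section SineSystem

variable {K L Q x α : ℝ}

theorem sin_add_of_sin_eq_mul_sin (hx : Real.sin x = L * Real.sin α) :
    Real.sin (x + α) = (Real.cos x + L * Real.cos α) * Real.sin α := by
  rw [Real.sin_add, hx]
  ring

theorem cos_eq_of_sin_eq_mul_sin (hK : K ≠ 0) (hQ : 2 * K * Q = K ^ 2 - L ^ 2 + 1)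
    (hx : Real.sin x = L * Real.sin α) (hcos : Real.cos x + L * Real.cos α = -K) :
    Real.cos x = -Q := by
  have hLcos : L * Real.cos α = -K - Real.cos x := by linarith
  have hLsq : (-K - Real.cos x) ^ 2 + Real.sin x ^ 2 = L ^ 2 := by
    rw [← hLcos, hx]
    linear_combination L ^ 2 * Real.sin_sq_add_cos_sq α
  have hmul : 2 * K * Real.cos x = 2 * K * -Q := by
    linear_combination hLsq - Real.sin_sq_add_cos_sq x + hQ
  exact mul_left_cancel₀ (mul_ne_zero two_ne_zero hK) hmul

theorem sin_sq_eq_mul_sin_sq_of_cos_eq (hQ : 2 * K * Q = K ^ 2 - L ^ 2 + 1)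
    (hx : Real.cos x = -Q) (hα : L * Real.cos α = Q - K) :
    Real.sin x ^ 2 = (L * Real.sin α) ^ 2 := by
  calc Real.sin x ^ 2 = 1 - Q ^ 2 := by rw [Real.sin_sq, hx, neg_sq]
    _ = L ^ 2 - (Q - K) ^ 2 := by linear_combination -hQ
    _ = (L * Real.sin α) ^ 2 := by
      rw [← hα]
      linear_combination -L ^ 2 * Real.sin_sq_add_cos_sq α

theorem sin_system_iff (hK : K ≠ 0) (hQ : 2 * K * Q = K ^ 2 - L ^ 2 + 1) :
    (Real.sin x = L * Real.sin α ∧ Real.sin (x + α) = -K * Real.sin α) ↔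
      (Real.sin x = 0 ∧ Real.sin α = 0) ∨
        (Real.cos x = -Q ∧ L * Real.cos α = Q - K ∧
          Real.sign (Real.sin x) = Real.sign (L * Real.sin α)) := by
  constructor
  · rintro ⟨hx, hadd⟩
    by_cases hα : Real.sin α = 0
    · exact .inl ⟨by rw [hx, hα, mul_zero], hα⟩
    · rw [sin_add_of_sin_eq_mul_sin hx] at hadd
      have hcos : Real.cos x + L * Real.cos α = -K := mul_right_cancel₀ hα hadd
      have hcosx : Real.cos x = -Q := cos_eq_of_sin_eq_mul_sin hK hQ hx hcos
      exact .inr ⟨hcosx, by linarith, congrArg Real.sign hx⟩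
  · rintro (⟨hx, hα⟩ | ⟨hcosx, hcosα, hsign⟩)
    · simp [Real.sin_add, hx, hα]
    · have hx : Real.sin x = L * Real.sin α :=
        eq_of_sq_eq_sq_of_sign_eq (sin_sq_eq_mul_sin_sq_of_cos_eq hQ hcosx hcosα) hsign
      refine ⟨hx, ?_⟩
      rw [sin_add_of_sin_eq_mul_sin hx, hcosx, hcosα]
      ring

theorem sin_system_iff_of_one_lt (hK : K ≠ 0) (hQ : 2 * K * Q = K ^ 2 - L ^ 2 + 1)
    (hQ1 : 1 < Q) :
    (Real.sin x = L * Real.sin α ∧ Real.sin (x + α) = -K * Real.sin α) ↔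
      Real.sin x = 0 ∧ Real.sin α = 0 := by
  rw [sin_system_iff hK hQ, or_iff_left]
  rintro ⟨hcos, -⟩
  linarith [Real.neg_one_le_cos x]

theorem sin_system_iff_of_neg (hK : K ≠ 0) (hQ : 2 * K * Q = K ^ 2 - L ^ 2 + 1) (hL : L < 0) :
    (Real.sin x = L * Real.sin α ∧ Real.sin (x + α) = -K * Real.sin α) ↔
      (Real.sin x = 0 ∧ Real.sin α = 0) ∨
        (Real.cos x = -Q ∧ Real.cos α = (Q - K) / L ∧
          Real.sign (Real.sin x) = -Real.sign (Real.sin α)) := by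
  rw [sin_system_iff hK hQ, sign_mul_of_neg hL, eq_div_iff hL.ne, mul_comm (Real.cos α)]

end SineSystem

theorem sin_eq_zero_iff_exists_eq_int_mul_pi {x : ℝ} :
    Real.sin x = 0 ↔ ∃ n : ℤ, x = n * Real.pi :=
  Real.sin_eq_zero_iff.trans (exists_congr fun _ => eq_comm)

theorem system_solutions_general (V₁ W₁ : ℝ)
    (hV : 0 < V₁) (hV1 : V₁ ≠ 1) (hW : W₁ ∈ Set.Ioo (0 : ℝ) 1) :
    let L : ℝ := (V₁ ^ 2 - W₁) / (V₁ * (1 - W₁))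
    let K : ℝ := W₁ * (1 - V₁ ^ 2) / (V₁ * (1 - W₁))
    let Q₁ : ℝ := V₁ * (1 + W₁) / (2 * W₁)
    Q₁ = (K ^ 2 - L ^ 2 + 1) / (2 * K) ∧
    (Q₁ > 1 → ∀ x α : ℝ,
      (Real.sin x = L * Real.sin α ∧ Real.sin (x + α) = -K * Real.sin α) ↔
        ((∃ j : ℤ, x = j * Real.pi) ∧ (∃ k : ℤ, α = k * Real.pi))) ∧
    (Q₁ ≤ 1 → L < 0 ∧ ∀ x α : ℝ,
      (Real.sin x = L * Real.sin α ∧ Real.sin (x + α) = -K * Real.sin α) ↔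
        (((∃ j : ℤ, x = j * Real.pi) ∧ (∃ k : ℤ, α = k * Real.pi)) ∨
          (Real.cos x = -Q₁ ∧ Real.cos α = (Q₁ - K) / L ∧
            Real.sign (Real.sin x) = -Real.sign (Real.sin α)))) := by
  intro L K Q₁
  obtain ⟨hW0, hW1⟩ := hW
  have hW_sub : 0 < 1 - W₁ := sub_pos.mpr hW1
  have hden : 0 < V₁ * (1 - W₁) := mul_pos hV hW_sub
  have hV_sub : 1 - V₁ ^ 2 ≠ 0 :=
    sub_ne_zero.mpr fun h => hV1 ((pow_eq_one_iff_of_nonneg hV.le two_ne_zero).mp h.symm)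
  have hK : K ≠ 0 := div_ne_zero (mul_ne_zero hW0.ne' hV_sub) hden.ne'
  have hQ : 2 * K * Q₁ = K ^ 2 - L ^ 2 + 1 := by
    simp only [K, L, Q₁]
    field_simp
    ring
  simp only [← sin_eq_zero_iff_exists_eq_int_mul_pi]
  refine ⟨eq_div_of_mul_eq (mul_ne_zero two_ne_zero hK) (by rw [mul_comm, hQ]),
    fun hQ1 x α => sin_system_iff_of_one_lt hK hQ hQ1, fun hQ1 => ?_⟩
  have hVW : V₁ ^ 2 < W₁ :=
    sq_lt_of_mul_one_add_le_two_mul hV.le hW0 hW1.ne ((div_le_one (by positivity)).mp hQ1)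
  have hL : L < 0 := div_neg_of_neg_of_pos (sub_neg.mpr hVW) hden
  exact ⟨hL, fun x α => sin_system_iff_of_neg hK hQ hL⟩

/-- Let `V₁, W₁ ∈ (0,1)`, with
`L = (V₁² − W₁)/(V₁(1−W₁))`, `K = W₁(1−V₁²)/(V₁(1−W₁))`,
`Q₁ = V₁(1+W₁)/(2W₁)` (equivalently `Q₁ = (K² − L² + 1)/(2K)`).
Consider the system `sin x = L·sin α`, `sin(x+α) = −K·sin α`.
If `Q₁ > 1` the solutions are exactly the pairs with `x` and `α` integer
multiples of `π`.  If `Q₁ ≤ 1` (in which case `L < 0`), the solutions are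
exactly those together with the pairs with `cos x = −Q₁`,
`cos α = (Q₁ − K)/L` and `sign(sin x) = −sign(sin α)`. -/
theorem system_solutions (V₁ W₁ : ℝ)
    (hV : V₁ ∈ Set.Ioo (0 : ℝ) 1) (hW : W₁ ∈ Set.Ioo (0 : ℝ) 1) :
    let L : ℝ := (V₁ ^ 2 - W₁) / (V₁ * (1 - W₁))
    let K : ℝ := W₁ * (1 - V₁ ^ 2) / (V₁ * (1 - W₁))
    let Q₁ : ℝ := V₁ * (1 + W₁) / (2 * W₁)
    Q₁ = (K ^ 2 - L ^ 2 + 1) / (2 * K) ∧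
    (Q₁ > 1 → ∀ x α : ℝ,
      (Real.sin x = L * Real.sin α ∧ Real.sin (x + α) = -K * Real.sin α) ↔
        ((∃ j : ℤ, x = j * Real.pi) ∧ (∃ k : ℤ, α = k * Real.pi))) ∧
    (Q₁ ≤ 1 → L < 0 ∧ ∀ x α : ℝ,
      (Real.sin x = L * Real.sin α ∧ Real.sin (x + α) = -K * Real.sin α) ↔
        (((∃ j : ℤ, x = j * Real.pi) ∧ (∃ k : ℤ, α = k * Real.pi)) ∨
          (Real.cos x = -Q₁ ∧ Real.cos α = (Q₁ - K) / L ∧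
            Real.sign (Real.sin x) = -Real.sign (Real.sin α)))) :=
  system_solutions_general V₁ W₁ hV.1 hV.2.ne hW
end
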